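/- Let $n < a \leq b$. Then the operator $\mathcal{K}_a^b$ is of weak type $(1, b/a)$: there is a constant $C$ such that for every $f \in L^1(\mathbb{R}^n)$ and every $\lambda > 0$, the Lebesgue measure of $\{x \in \mathbb{R}^n : |\mathcal{K}_a^b f(x)| > \lambda\}$ is at most $\left(C \|f\|_{L^1} / \lambda\right)^{b/a}$. -/

import Mathlib

open MeasureTheory
open scoped ENNReal

/-- The integral operator `𝒦ₐᵇ f (x) = ∫ |‖x‖ₐᵃ - ‖y‖ₐᵃ|^{-n/b} f(y) dy`,
where `‖x‖ₐᵃ = ∑ᵢ |xᵢ|^a`. -/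
noncomputable def Kab (n : ℕ) (a b : ℝ) (f : EuclideanSpace ℝ (Fin n) → ℝ)
    (x : EuclideanSpace ℝ (Fin n)) : ℝ :=
  ∫ y : EuclideanSpace ℝ (Fin n),
    |(∑ i, |x i| ^ a) - ∑ i, |y i| ^ a| ^ (-((n : ℝ) / b)) * f y

/-!
The kernel depends on `x` and `y` only through `g x = ‖x‖ₐᵃ` and `g y`, so everything takes place
on the line: `g` pushes Lebesgue measure forward to a measure `W` with
`W (-∞, u] = c u ^ (n / a)`, and `|𝒦ₐᵇ f x|` is at most the Riesz potential
`∫ |t - s| ^ (-n / b) dν(s)` at `t = g x`, where `ν` is the image of `|f| dx`.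

Put `β = n / b`, `p = b / a`, so that `β p = n / a < 1`, and split the potential at
`|t - s| = t / 2`.
* Near the diagonal `s` and `t` are comparable. There `W` has density at most a multiple of
  `s ^ (β p - 1)`, while `|t - s| ^ (-β p)` has integral at most a multiple of `s ^ (1 - β p)`.
  Hence the `p`-th power of the kernel has `W`-integral bounded uniformly in `s`, and Jensen's
  inequality gives strong type `(1, p)`. This works for `p = 1` too, where weak `L¹` is not
  normable.
* Away from the diagonal the potential is at most `(t / 2) ^ (-β) ‖f‖₁`, and `t ^ (-β)` lies in weak
  `Lᵖ(W)` by the formula for `W (-∞, u]`.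
-/

open Set Measure
open scoped NNReal Pointwise

/-! ### Integrals of powers on the line -/

theorem lintegral_Ioc_ofReal_mul_rpow_sub_one {α u v : ℝ} (hα : 0 ≤ α) (hu : 0 ≤ u)
    (huv : u ≤ v) :
    ∫⁻ t in Ioc u v, ENNReal.ofReal (α * t ^ (α - 1)) = ENNReal.ofReal (v ^ α - u ^ α) := by
  rcases hα.eq_or_lt with rfl | hα_pos
  · simp
  have hint : IntegrableOn (fun t : ℝ ↦ α * t ^ (α - 1)) (Ioc u v) := by
    rw [← intervalIntegrable_iff_integrableOn_Ioc_of_le huv]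
    exact (intervalIntegral.intervalIntegrable_rpow' (by linarith)).const_mul α
  have hnonneg : 0 ≤ᵐ[volume.restrict (Ioc u v)] fun t : ℝ ↦ α * t ^ (α - 1) := by
    filter_upwards [ae_restrict_mem measurableSet_Ioc] with t ht
    exact mul_nonneg hα (Real.rpow_nonneg (hu.trans ht.1.le) _)
  rw [← ofReal_integral_eq_lintegral_ofReal hint hnonneg, ← intervalIntegral.integral_of_le huv,
    intervalIntegral.integral_const_mul, integral_rpow (Or.inl (by linarith)), sub_add_cancel,
    mul_div_cancel₀ _ hα_pos.ne']

theorem lintegral_Icc_enorm_rpow_neg {α r : ℝ} (hα : α < 1) (hr : 0 ≤ r) :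
    ∫⁻ t in Icc 0 r, ‖t‖ₑ ^ (-α) = ENNReal.ofReal (r ^ (1 - α) / (1 - α)) := by
  have hα' : 0 < 1 - α := sub_pos.2 hα
  have hpow : ∀ t ∈ Ioc 0 r, ‖t‖ₑ ^ (-α) =
      ENNReal.ofReal (1 - α)⁻¹ * ENNReal.ofReal ((1 - α) * t ^ (1 - α - 1)) := by
    intro t ht
    rw [Real.enorm_of_nonneg ht.1.le, ENNReal.ofReal_rpow_of_pos ht.1,
      ← ENNReal.ofReal_mul (inv_nonneg.2 hα'.le), inv_mul_cancel_left₀ hα'.ne',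
      sub_sub_cancel_left]
  rw [← setLIntegral_congr Ioc_ae_eq_Icc, setLIntegral_congr_fun measurableSet_Ioc hpow,
    lintegral_const_mul _ (by fun_prop),
    lintegral_Ioc_ofReal_mul_rpow_sub_one hα'.le le_rfl hr, Real.zero_rpow hα'.ne', sub_zero,
    ← ENNReal.ofReal_mul (inv_nonneg.2 hα'.le), inv_mul_eq_div]

theorem lintegral_ball_enorm_sub_rpow_neg_le {α r : ℝ} (hα : α < 1) (hr : 0 ≤ r) (s : ℝ) :
    ∫⁻ t in Metric.ball s r, ‖t - s‖ₑ ^ (-α) ≤ ENNReal.ofReal (2 * (r ^ (1 - α) / (1 - α))) := by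
  have htranslate : ∫⁻ t in Metric.ball s r, ‖t - s‖ₑ ^ (-α) =
      ∫⁻ t in Metric.ball (0 : ℝ) r, ‖t‖ₑ ^ (-α) := by
    have hball : Metric.ball s r = (fun t ↦ t - s) ⁻¹' Metric.ball (0 : ℝ) r := by
      ext t; simp [dist_eq_norm]
    rw [hball]
    exact (measurePreserving_sub_right volume s).setLIntegral_comp_preimage
      measurableSet_ball (f := fun t : ℝ ↦ ‖t‖ₑ ^ (-α)) (by fun_prop)
  have hreflect : ∫⁻ t in Icc (-r) 0, ‖t‖ₑ ^ (-α) = ∫⁻ t in Icc 0 r, ‖t‖ₑ ^ (-α) := by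
    have h := (measurePreserving_neg (volume : Measure ℝ)).setLIntegral_comp_preimage
      (measurableSet_Icc (a := 0) (b := r)) (f := fun t : ℝ ↦ ‖t‖ₑ ^ (-α)) (by fun_prop)
    simpa using h
  have hcover : Metric.ball (0 : ℝ) r ⊆ Icc (-r) 0 ∪ Icc 0 r := by
    rw [Icc_union_Icc_eq_Icc (neg_nonpos.2 hr) hr, Real.ball_eq_Ioo, zero_sub, zero_add]
    exact Ioo_subset_Icc_self
  calc ∫⁻ t in Metric.ball s r, ‖t - s‖ₑ ^ (-α)
      ≤ ∫⁻ t in Icc (-r) 0 ∪ Icc 0 r, ‖t‖ₑ ^ (-α) := htranslate ▸ lintegral_mono_set hcover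
    _ ≤ (∫⁻ t in Icc (-r) 0, ‖t‖ₑ ^ (-α)) + ∫⁻ t in Icc 0 r, ‖t‖ₑ ^ (-α) :=
      lintegral_union_le _ _ _
    _ = ENNReal.ofReal (2 * (r ^ (1 - α) / (1 - α))) := by
      rw [hreflect, lintegral_Icc_enorm_rpow_neg hα hr, ENNReal.ofReal_mul zero_le_two,
        ENNReal.ofReal_ofNat, two_mul]

/-! ### Strong type bounds for integral kernels -/

theorem rpow_lintegral_le_lintegral_rpow_mul {Y : Type*} [MeasurableSpace Y] {ν : Measure Y}
    {p : ℝ} (hp : 1 ≤ p) {φ : Y → ℝ≥0∞} (hφ : AEMeasurable φ ν) :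
    (∫⁻ y, φ y ∂ν) ^ p ≤ (∫⁻ y, φ y ^ p ∂ν) * ν univ ^ (p - 1) := by
  have hp_pos : 0 < p := by linarith
  have h := eLpNorm'_le_eLpNorm'_mul_rpow_measure_univ one_pos hp hφ.aestronglyMeasurable
  simp only [eLpNorm', enorm_eq_self, ENNReal.rpow_one, div_one] at h
  have hexp : (1 - 1 / p) * p = p - 1 := by field_simp
  calc (∫⁻ y, φ y ∂ν) ^ p
      ≤ ((∫⁻ y, φ y ^ p ∂ν) ^ (1 / p) * ν univ ^ (1 - 1 / p)) ^ p := by gcongr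
    _ = (∫⁻ y, φ y ^ p ∂ν) * ν univ ^ (p - 1) := by
      rw [ENNReal.mul_rpow_of_nonneg _ _ hp_pos.le, ← ENNReal.rpow_mul, ← ENNReal.rpow_mul,
        one_div_mul_cancel hp_pos.ne', ENNReal.rpow_one, hexp]

theorem lintegral_rpow_lintegral_le {X Y : Type*} [MeasurableSpace X] [MeasurableSpace Y]
    {μ : Measure X} {ν : Measure Y} [SFinite μ] [SFinite ν] {p : ℝ} (hp : 1 ≤ p)
    {k : X → Y → ℝ≥0∞} (hk : Measurable (Function.uncurry k)) {M : ℝ≥0∞}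
    (hM : ∀ y, ∫⁻ x, k x y ^ p ∂μ ≤ M) :
    ∫⁻ x, (∫⁻ y, k x y ∂ν) ^ p ∂μ ≤ M * ν univ ^ p := by
  have hkp : Measurable (Function.uncurry fun x y ↦ k x y ^ p) := hk.pow_const p
  have hkp_int : Measurable fun x ↦ ∫⁻ y, k x y ^ p ∂ν := hkp.lintegral_prod_right'
  calc ∫⁻ x, (∫⁻ y, k x y ∂ν) ^ p ∂μ
      ≤ ∫⁻ x, (∫⁻ y, k x y ^ p ∂ν) * ν univ ^ (p - 1) ∂μ :=
      lintegral_mono fun x ↦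
        rpow_lintegral_le_lintegral_rpow_mul hp (hk.of_uncurry_left (x := x)).aemeasurable
    _ = (∫⁻ y, ∫⁻ x, k x y ^ p ∂μ ∂ν) * ν univ ^ (p - 1) := by
      rw [lintegral_mul_const _ hkp_int, lintegral_lintegral_swap hkp.aemeasurable]
    _ ≤ (∫⁻ _, M ∂ν) * ν univ ^ (p - 1) := by gcongr with y; exact hM y
    _ = M * ν univ ^ p := by
      rw [lintegral_const, mul_assoc]
      nth_rw 1 [← ENNReal.rpow_one (ν univ)]
      rw [← ENNReal.rpow_add_of_nonneg _ _ zero_le_one (sub_nonneg.2 hp), add_sub_cancel]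

/-! ### Measures with a power distribution function -/

/-- The distribution function of the measure `W` on the line is `u ↦ c u ^ α` on `[0, ∞)`. For
`α = 0` this says that `W` has total mass `c`, all of it on `(-∞, 0]`, since `0 ^ 0 = 1`. -/
def HasPowerDistribution (W : Measure ℝ) (c : ℝ≥0) (α : ℝ) : Prop :=
  ∀ u, 0 ≤ u → W (Iic u) = c * ENNReal.ofReal (u ^ α)

theorem hasPowerDistribution_map_of_homogeneous {E : Type*} [NormedAddCommGroup E]
    [NormedSpace ℝ E] [FiniteDimensional ℝ E] [MeasurableSpace E] [BorelSpace E] {μ : Measure E}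
    [μ.IsAddHaarMeasure] {g : E → ℝ} {a : ℝ} (ha : 0 < a) (hg : Measurable g)
    (hom : ∀ r : ℝ, 0 ≤ r → ∀ x, g (r • x) = r ^ a * g x) (hpos : ∀ x, x ≠ 0 → 0 < g x)
    (hfin : μ {x | g x ≤ 1} ≠ ∞) :
    HasPowerDistribution (μ.map g) (μ {x | g x ≤ 1}).toNNReal (Module.finrank ℝ E / a) := by
  intro u hu
  have hg_zero : g 0 = 0 := by
    simpa [Real.zero_rpow ha.ne'] using hom 0 le_rfl 0
  have hsublevel : g ⁻¹' Iic u = u ^ a⁻¹ • {x | g x ≤ 1} := by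
    rcases hu.eq_or_lt with rfl | hu_pos
    · rw [Real.zero_rpow (inv_ne_zero ha.ne'), zero_smul_set ⟨0, by simp [hg_zero]⟩]
      ext x
      rcases eq_or_ne x 0 with rfl | hx
      · simp [hg_zero]
      · simp [hx, hpos x hx]
    · ext x
      rw [mem_smul_set_iff_inv_smul_mem₀ (by positivity), mem_ofPred_eq, hom _ (by positivity),
        Real.inv_rpow (by positivity), Real.rpow_inv_rpow hu ha.ne', inv_mul_le_one₀ hu_pos]
      rfl
  have hscale : (u ^ a⁻¹) ^ Module.finrank ℝ E = u ^ (Module.finrank ℝ E / a) := by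
    rw [← Real.rpow_mul_natCast hu, inv_mul_eq_div]
  rw [map_apply hg measurableSet_Iic, hsublevel, addHaar_smul, hscale,
    abs_of_nonneg (by positivity), ENNReal.coe_toNNReal hfin, mul_comm]

theorem exists_hasPowerDistribution_map_sum_abs_rpow (ι : Type*) [Fintype ι] {a : ℝ}
    (ha : 0 < a) :
    ∃ c, HasPowerDistribution ((volume : Measure (EuclideanSpace ℝ ι)).map
      fun x ↦ ∑ i, |x i| ^ a) c (Fintype.card ι / a) := by
  have hbounded : Bornology.IsBounded {x : EuclideanSpace ℝ ι | ∑ i, |x i| ^ a ≤ 1} := by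
    refine isBounded_iff_forall_norm_le.2 ⟨√(Fintype.card ι), fun x hx ↦ ?_⟩
    have hcoord (i : ι) : |x i| ≤ 1 := by
      have hle : |x i| ^ a ≤ 1 :=
        (Finset.single_le_sum (f := fun j ↦ |x j| ^ a) (fun j _ ↦ by positivity)
          (Finset.mem_univ i)).trans hx
      exact not_lt.1 fun hlt ↦ (Real.one_lt_rpow hlt ha).not_ge hle
    rw [EuclideanSpace.norm_eq]
    gcongr
    calc ∑ i, ‖x i‖ ^ 2 ≤ ∑ _ : ι, (1 : ℝ) := by
          gcongr with i
          exact pow_le_one₀ (norm_nonneg _) (hcoord i)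
      _ = Fintype.card ι := by simp
  refine ⟨_, finrank_euclideanSpace (𝕜 := ℝ) (ι := ι) ▸ hasPowerDistribution_map_of_homogeneous ha
    (by fun_prop) (fun r hr x ↦ ?_) (fun x hx ↦ ?_) hbounded.measure_lt_top.ne⟩
  · simp only [PiLp.smul_apply, smul_eq_mul, abs_mul, abs_of_nonneg hr,
      Real.mul_rpow hr (abs_nonneg _), Finset.mul_sum]
  · obtain ⟨i, hi⟩ : ∃ i, x i ≠ 0 := by
      contrapose! hx
      ext i
      exact hx i
    exact Finset.sum_pos' (fun _ _ ↦ by positivity) ⟨i, Finset.mem_univ i, by positivity⟩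

namespace HasPowerDistribution

variable {W : Measure ℝ} {c : ℝ≥0} {α : ℝ}

theorem measure_Iic_lt_top (h : HasPowerDistribution W c α) (u : ℝ) : W (Iic u) < ∞ := by
  refine (measure_mono (Iic_subset_Iic.2 (le_max_left u 0))).trans_lt ?_
  rw [h _ (le_max_right u 0)]
  exact ENNReal.mul_lt_top ENNReal.coe_lt_top ENNReal.ofReal_lt_top

theorem isLocallyFiniteMeasure (h : HasPowerDistribution W c α) : IsLocallyFiniteMeasure W :=
  ⟨fun x ↦ ⟨Iic (x + 1), Iic_mem_nhds (lt_add_one x), h.measure_Iic_lt_top _⟩⟩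

theorem measure_univ_of_exponent_zero (h : HasPowerDistribution W c 0) : W univ = c := by
  refine tendsto_nhds_unique (tendsto_measure_Iic_atTop W) (tendsto_const_nhds.congr' ?_)
  filter_upwards [Filter.eventually_ge_atTop 0] with u hu
  simp [h u hu]

theorem measure_Ioc (h : HasPowerDistribution W c α) {u v : ℝ} (hu : 0 ≤ u) (huv : u ≤ v) :
    W (Ioc u v) = c * ENNReal.ofReal (v ^ α - u ^ α) := by
  rw [← Iic_sdiff_Iic, measure_sdiff (Iic_subset_Iic.2 huv) nullMeasurableSet_Iic
    (h.measure_Iic_lt_top u).ne, h v (hu.trans huv), h u hu,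
    ENNReal.ofReal_sub _ (Real.rpow_nonneg hu _), ENNReal.mul_sub fun _ _ ↦ ENNReal.coe_ne_top]

theorem restrict_Ioi_eq_withDensity (h : HasPowerDistribution W c α) (hα : 0 ≤ α) :
    W.restrict (Ioi 0) =
      (volume.restrict (Ioi 0)).withDensity fun t ↦ c * ENNReal.ofReal (α * t ^ (α - 1)) := by
  refine ext_of_Ioc' _ _ (fun u v _ ↦ ?_) fun u v _ ↦ ?_
  · exact ((measure_mono Ioc_subset_Iic_self).trans_lt
      ((restrict_apply_le _ _).trans_lt (h.measure_Iic_lt_top v))).ne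
  rw [withDensity_apply _ measurableSet_Ioc, restrict_restrict measurableSet_Ioc,
    Measure.restrict_apply measurableSet_Ioc, Ioc_inter_Ioi, lintegral_const_mul _ (by fun_prop)]
  rcases le_total v (u ⊔ 0) with hv | hv
  · simp [Ioc_eq_empty hv.not_gt]
  · rw [lintegral_Ioc_ofReal_mul_rpow_sub_one hα le_sup_right hv, h.measure_Ioc le_sup_right hv]

end HasPowerDistribution

/-! ### Riesz potentials -/

/-- The Riesz potential `∫ |t - s| ^ (-β) dν(s)` of a measure on the line, with values in `[0, ∞]`;
for `β > 0` the kernel is `∞` on the diagonal. -/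
noncomputable def rieszPotential (β : ℝ) (ν : Measure ℝ) (t : ℝ) : ℝ≥0∞ :=
  ∫⁻ s, ‖t - s‖ₑ ^ (-β) ∂ν

/-- The part of the Riesz kernel `|t - s| ^ (-β)` near the diagonal, on the region
`|t - s| < t / 2`; in particular it vanishes unless `s` and `t` are positive. -/
noncomputable def nearRieszKernel (β t s : ℝ) : ℝ≥0∞ :=
  {q : ℝ × ℝ | |q.1 - q.2| < q.1 / 2}.indicator (fun q ↦ ‖q.1 - q.2‖ₑ ^ (-β)) (t, s)

theorem measurable_uncurry_nearRieszKernel (β : ℝ) :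
    Measurable (Function.uncurry (nearRieszKernel β)) :=
  Measurable.indicator (by fun_prop) (measurableSet_lt (by fun_prop) (by fun_prop))

theorem nearRieszKernel_rpow {p : ℝ} (hp : 0 < p) (β t s : ℝ) :
    nearRieszKernel β t s ^ p = nearRieszKernel (β * p) t s := by
  unfold nearRieszKernel indicator
  split_ifs
  · rw [← ENNReal.rpow_mul, neg_mul]
  · exact ENNReal.zero_rpow_of_pos hp

theorem enorm_sub_rpow_neg_le_nearRieszKernel_add {β : ℝ} (hβ : 0 ≤ β) (t s : ℝ) :
    ‖t - s‖ₑ ^ (-β) ≤ nearRieszKernel β t s + ENNReal.ofReal (t / 2) ^ (-β) := by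
  by_cases hnear : |t - s| < t / 2
  · rw [nearRieszKernel, indicator_of_mem (by exact hnear)]
    exact le_self_add
  · refine le_add_left ?_
    rw [ENNReal.rpow_neg, ENNReal.rpow_neg, ENNReal.inv_le_inv, Real.enorm_eq_ofReal_abs]
    gcongr
    exact not_lt.1 hnear

theorem bounds_of_abs_sub_lt_half {t s : ℝ} (h : |t - s| < t / 2) :
    0 < t ∧ s / 2 < t ∧ |t - s| < s := by
  obtain ⟨hlower, hupper⟩ := abs_lt.1 h
  have := (abs_nonneg (t - s)).trans_lt h
  exact ⟨by linarith, by linarith, by linarith⟩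

theorem ofReal_mul_rpow_mul_nearRieszKernel_le {α : ℝ} (hα : 0 ≤ α) (hα1 : α ≤ 1) (t s : ℝ) :
    ENNReal.ofReal (α * t ^ (α - 1)) * nearRieszKernel α t s ≤
      ENNReal.ofReal (α * (s / 2) ^ (α - 1)) *
        (Metric.ball s s).indicator (fun t ↦ ‖t - s‖ₑ ^ (-α)) t := by
  by_cases hnear : |t - s| < t / 2
  · obtain ⟨-, hst, hball⟩ := bounds_of_abs_sub_lt_half hnear
    have hs : 0 < s := (abs_nonneg _).trans_lt hball
    rw [nearRieszKernel, indicator_of_mem (by exact hnear), indicator_of_mem (by exact hball)]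
    gcongr ENNReal.ofReal (α * ?_) * _
    exact Real.rpow_le_rpow_of_nonpos (by positivity) hst.le (by linarith)
  · rw [nearRieszKernel, indicator_of_notMem (by exact hnear), mul_zero]
    exact zero_le

theorem rieszPotential_le {β : ℝ} (hβ : 0 ≤ β) (ν : Measure ℝ) (t : ℝ) :
    rieszPotential β ν t ≤
      (∫⁻ s, nearRieszKernel β t s ∂ν) + ENNReal.ofReal (t / 2) ^ (-β) * ν univ := by
  calc rieszPotential β ν t
      ≤ ∫⁻ s, (nearRieszKernel β t s + ENNReal.ofReal (t / 2) ^ (-β)) ∂ν :=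
      lintegral_mono fun s ↦ enorm_sub_rpow_neg_le_nearRieszKernel_add hβ t s
    _ = (∫⁻ s, nearRieszKernel β t s ∂ν) + ENNReal.ofReal (t / 2) ^ (-β) * ν univ := by
      rw [lintegral_add_right _ measurable_const, lintegral_const]

namespace HasPowerDistribution

variable {W : Measure ℝ} {c : ℝ≥0} {α β p : ℝ}

theorem lintegral_nearRieszKernel_eq (h : HasPowerDistribution W c α) (hα : 0 ≤ α) (s : ℝ) :
    ∫⁻ t, nearRieszKernel α t s ∂W =
      c * ∫⁻ t in Ioi 0, ENNReal.ofReal (α * t ^ (α - 1)) * nearRieszKernel α t s := by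
  have hmeas : Measurable fun t ↦ nearRieszKernel α t s :=
    (measurable_uncurry_nearRieszKernel α).of_uncurry_right
  have hsupport : (Function.support fun t ↦ nearRieszKernel α t s) ⊆ Ioi 0 := by
    intro t ht
    have hnear : (t, s) ∈ {q : ℝ × ℝ | |q.1 - q.2| < q.1 / 2} := mem_of_indicator_ne_zero ht
    exact (bounds_of_abs_sub_lt_half hnear).1
  rw [← setLIntegral_eq_of_support_subset hsupport, h.restrict_Ioi_eq_withDensity hα,
    lintegral_withDensity_eq_lintegral_mul _ (by fun_prop) hmeas,
    ← lintegral_const_mul _ (by fun_prop)]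
  simp only [Pi.mul_apply, mul_assoc]

theorem lintegral_nearRieszKernel_le (h : HasPowerDistribution W c α) (hα : 0 ≤ α) (hα1 : α < 1)
    (s : ℝ) :
    ∫⁻ t, nearRieszKernel α t s ∂W ≤ c * ENNReal.ofReal (2 ^ (2 - α) * α / (1 - α)) := by
  have hα' : 0 < 1 - α := sub_pos.2 hα1
  rw [h.lintegral_nearRieszKernel_eq hα]
  gcongr
  calc ∫⁻ t in Ioi 0, ENNReal.ofReal (α * t ^ (α - 1)) * nearRieszKernel α t s
      ≤ ∫⁻ t, ENNReal.ofReal (α * (s / 2) ^ (α - 1)) *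
          (Metric.ball s s).indicator (fun t ↦ ‖t - s‖ₑ ^ (-α)) t :=
      (setLIntegral_le_lintegral _ _).trans
        (lintegral_mono fun t ↦ ofReal_mul_rpow_mul_nearRieszKernel_le hα hα1.le t s)
    _ = ENNReal.ofReal (α * (s / 2) ^ (α - 1)) * ∫⁻ t in Metric.ball s s, ‖t - s‖ₑ ^ (-α) := by
      rw [lintegral_const_mul _ ((by fun_prop : Measurable _).indicator measurableSet_ball),
        lintegral_indicator measurableSet_ball]
    _ ≤ ENNReal.ofReal (2 ^ (2 - α) * α / (1 - α)) := ?_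
  rcases le_or_gt s 0 with hs | hs
  · simp [Metric.ball_eq_empty.2 hs]
  have hconst : α * (s / 2) ^ (α - 1) * (2 * (s ^ (1 - α) / (1 - α))) =
      2 ^ (2 - α) * α / (1 - α) := by
    have hs_pow : s ^ (α - 1) * s ^ (1 - α) = 1 := by
      rw [← Real.rpow_add hs]; simp
    have htwo_pow : (2 : ℝ) ^ (2 - α) * 2 ^ (α - 1) = 2 := by
      rw [← Real.rpow_add two_pos]; norm_num
    rw [Real.div_rpow hs.le zero_le_two]
    field_simp
    linear_combination 2 * α * hs_pow - α * htwo_pow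
  rw [← hconst, ENNReal.ofReal_mul (by positivity : 0 ≤ α * (s / 2) ^ (α - 1))]
  gcongr
  exact lintegral_ball_enorm_sub_rpow_neg_le hα1 hs.le s

theorem lintegral_rpow_lintegral_nearRieszKernel_le (h : HasPowerDistribution W c (β * p))
    (hβ : 0 ≤ β) (hp : 1 ≤ p) (hβp : β * p < 1) (ν : Measure ℝ) [SFinite ν] :
    ∫⁻ t, (∫⁻ s, nearRieszKernel β t s ∂ν) ^ p ∂W ≤
      c * ENNReal.ofReal (2 ^ (2 - β * p) * (β * p) / (1 - β * p)) * ν univ ^ p := by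
  have := h.isLocallyFiniteMeasure
  have hp_pos : 0 < p := by linarith
  refine lintegral_rpow_lintegral_le hp (measurable_uncurry_nearRieszKernel β) fun s ↦ ?_
  simp_rw [nearRieszKernel_rpow hp_pos]
  exact h.lintegral_nearRieszKernel_le (by positivity) hβp s

theorem measure_ofReal_half_lt_le (h : HasPowerDistribution W c α) (hα : 0 ≤ α) (r : ℝ≥0) :
    W {t | ENNReal.ofReal (t / 2) < r} ≤ c * ENNReal.ofReal (2 ^ α) * (r : ℝ≥0∞) ^ α := by
  have hsub : {t | ENNReal.ofReal (t / 2) < r} ⊆ Iic (2 * (r : ℝ)) := by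
    intro t ht
    have hlt : t / 2 < r :=
      (Real.le_coe_toNNReal _).trans_lt (NNReal.coe_lt_coe.2 (ENNReal.coe_lt_coe.1 ht))
    rw [mem_Iic]
    linarith
  refine (measure_mono hsub).trans_eq ?_
  rw [h _ (by positivity), Real.mul_rpow zero_le_two r.coe_nonneg,
    ENNReal.ofReal_mul (by positivity), ← ENNReal.ofReal_rpow_of_nonneg r.coe_nonneg hα,
    ENNReal.ofReal_coe_nnreal, mul_assoc]

theorem rpow_mul_measure_lt_half_rpow_neg_le (h : HasPowerDistribution W c (β * p)) (hβ : 0 ≤ β)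
    (hp : 0 < p) (l : ℝ≥0∞) :
    l ^ p * W {t | l < ENNReal.ofReal (t / 2) ^ (-β)} ≤ c * ENNReal.ofReal (2 ^ (β * p)) := by
  rcases eq_or_ne l 0 with rfl | hl_zero
  · simp [ENNReal.zero_rpow_of_pos hp]
  rcases eq_or_ne l ∞ with rfl | hl_top
  · simp
  rcases hβ.eq_or_lt with rfl | hβ_pos
  · rw [zero_mul] at h
    rcases lt_or_ge l 1 with hl | hl
    · simpa [hl, h.measure_univ_of_exponent_zero] using
        mul_le_of_le_one_left (zero_le (a := (c : ℝ≥0∞))) (ENNReal.rpow_le_one hl.le hp.le)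
    · simp [hl.not_gt]
  obtain ⟨r, hr⟩ : ∃ r : ℝ≥0, (r : ℝ≥0∞) = l⁻¹ ^ β⁻¹ := ENNReal.canLift.prf _ <|
    ENNReal.rpow_ne_top_of_nonneg (inv_nonneg.2 hβ) (ENNReal.inv_ne_top.2 hl_zero)
  have hlevel (t : ℝ) :
      l < ENNReal.ofReal (t / 2) ^ (-β) ↔ ENNReal.ofReal (t / 2) < r := by
    rw [ENNReal.rpow_neg, ENNReal.lt_inv_iff_lt_inv, hr, ENNReal.lt_rpow_inv_iff hβ_pos]
  have hr_pow : (r : ℝ≥0∞) ^ (β * p) = (l ^ p)⁻¹ := by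
    rw [hr, ← ENNReal.rpow_mul, inv_mul_cancel_left₀ hβ_pos.ne', ENNReal.inv_rpow]
  calc l ^ p * W {t | l < ENNReal.ofReal (t / 2) ^ (-β)}
      ≤ l ^ p * (c * ENNReal.ofReal (2 ^ (β * p)) * (l ^ p)⁻¹) := by
        simp_rw [hlevel, ← hr_pow]
        gcongr
        exact h.measure_ofReal_half_lt_le (by positivity) r
    _ = c * ENNReal.ofReal (2 ^ (β * p)) := by
      rw [mul_left_comm, ENNReal.mul_inv_cancel, mul_one]
      · simp [hl_zero, hl_top]
      · exact ENNReal.rpow_ne_top_of_nonneg hp.le hl_top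

theorem rpow_mul_measure_lt_half_rpow_neg_mul_le (h : HasPowerDistribution W c (β * p))
    (hβ : 0 ≤ β) (hp : 0 < p) (l : ℝ≥0∞) {N : ℝ≥0∞} (hN : N ≠ ∞) :
    l ^ p * W {t | l < ENNReal.ofReal (t / 2) ^ (-β) * N} ≤
      c * ENNReal.ofReal (2 ^ (β * p)) * N ^ p := by
  rcases eq_or_ne N 0 with rfl | hN_zero
  · simp
  calc l ^ p * W {t | l < ENNReal.ofReal (t / 2) ^ (-β) * N}
      ≤ (l / N * N) ^ p * W {t | l / N < ENNReal.ofReal (t / 2) ^ (-β)} := by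
        rw [ENNReal.div_mul_cancel hN_zero hN]
        gcongr l ^ p * W ?_
        exact fun t ht ↦ ENNReal.div_lt_of_lt_mul ht
    _ = (l / N) ^ p * W {t | l / N < ENNReal.ofReal (t / 2) ^ (-β)} * N ^ p := by
      rw [ENNReal.mul_rpow_of_nonneg _ _ hp.le, mul_right_comm]
    _ ≤ c * ENNReal.ofReal (2 ^ (β * p)) * N ^ p := by
      gcongr ?_ * N ^ p
      exact h.rpow_mul_measure_lt_half_rpow_neg_le hβ hp _

theorem rpow_mul_measure_le_lintegral_nearRieszKernel_le (h : HasPowerDistribution W c (β * p))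
    (hβ : 0 ≤ β) (hp : 1 ≤ p) (hβp : β * p < 1) (ν : Measure ℝ) [SFinite ν] (l : ℝ≥0∞) :
    l ^ p * W {t | l ≤ ∫⁻ s, nearRieszKernel β t s ∂ν} ≤
      c * ENNReal.ofReal (2 ^ (2 - β * p) * (β * p) / (1 - β * p)) * ν univ ^ p := by
  have hp_pos : 0 < p := by linarith
  have hmeas : Measurable fun t ↦ ∫⁻ s, nearRieszKernel β t s ∂ν :=
    (measurable_uncurry_nearRieszKernel β).lintegral_prod_right'
  have hmarkov := mul_meas_ge_le_lintegral (μ := W) (hmeas.pow_const p) (l ^ p)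
  simp_rw [ENNReal.rpow_le_rpow_iff hp_pos] at hmarkov
  exact hmarkov.trans (h.lintegral_rpow_lintegral_nearRieszKernel_le hβ hp hβp ν)

theorem exists_rpow_mul_measure_lt_rieszPotential_le (h : HasPowerDistribution W c (β * p))
    (hβ : 0 ≤ β) (hp : 1 ≤ p) (hβp : β * p < 1) :
    ∃ C ≠ ∞, ∀ (ν : Measure ℝ) [IsFiniteMeasure ν] (l : ℝ≥0∞),
      l ^ p * W {t | l < rieszPotential β ν t} ≤ C * ν univ ^ p := by
  have hp_pos : 0 < p := by linarith
  set A := c * ENNReal.ofReal (2 ^ (2 - β * p) * (β * p) / (1 - β * p))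
  set B := c * ENNReal.ofReal (2 ^ (β * p))
  refine ⟨2 ^ p * (A + B), by finiteness, fun ν _ l ↦ ?_⟩
  have hsub : {t | l < rieszPotential β ν t} ⊆ {t | l / 2 ≤ ∫⁻ s, nearRieszKernel β t s ∂ν} ∪
      {t | l / 2 < ENNReal.ofReal (t / 2) ^ (-β) * ν univ} := by
    intro t ht
    by_contra hnot
    simp only [mem_union, mem_ofPred_eq, not_or, not_le, not_lt] at hnot
    refine ht.not_ge ((rieszPotential_le hβ ν t).trans ?_)
    exact (add_le_add hnot.1.le hnot.2).trans_eq (ENNReal.add_halves l)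
  have hl : l ^ p = 2 ^ p * (l / 2) ^ p := by
    rw [← ENNReal.mul_rpow_of_nonneg _ _ hp_pos.le,
      ENNReal.mul_div_cancel two_ne_zero ENNReal.ofNat_ne_top]
  rw [hl, mul_assoc, mul_assoc, add_mul]
  gcongr
  calc (l / 2) ^ p * W {t | l < rieszPotential β ν t}
      ≤ (l / 2) ^ p * (W {t | l / 2 ≤ ∫⁻ s, nearRieszKernel β t s ∂ν} +
          W {t | l / 2 < ENNReal.ofReal (t / 2) ^ (-β) * ν univ}) := by
        gcongr
        exact (measure_mono hsub).trans (measure_union_le _ _)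
    _ ≤ A * ν univ ^ p + B * ν univ ^ p := by
      rw [mul_add]
      gcongr ?_ + ?_
      · exact h.rpow_mul_measure_le_lintegral_nearRieszKernel_le hβ hp hβp ν _
      · exact h.rpow_mul_measure_lt_half_rpow_neg_mul_le hβ hp_pos _ (measure_ne_top ν _)

end HasPowerDistribution

/-! ### The operator -/

theorem exists_pos_le_ofReal_rpow {C : ℝ≥0∞} (hC : C ≠ ∞) {p : ℝ} (hp : 0 < p) :
    ∃ D : ℝ, 0 < D ∧ C ≤ ENNReal.ofReal D ^ p := by
  obtain ⟨r, hr, -⟩ := ENNReal.lt_iff_exists_nnreal_btwn.1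
    (ENNReal.rpow_lt_top_of_nonneg (inv_nonneg.2 hp.le) hC)
  refine ⟨r, NNReal.coe_pos.2 (ENNReal.coe_pos.1 (bot_le.trans_lt hr)), ?_⟩
  rw [ENNReal.ofReal_coe_nnreal]
  exact ((ENNReal.rpow_inv_lt_iff hp).1 hr).le

theorem enorm_abs_rpow_le (t r : ℝ) : ‖|t| ^ r‖ₑ ≤ ‖t‖ₑ ^ r := by
  rcases eq_or_ne t 0 with rfl | ht
  · rcases eq_or_ne r 0 with rfl | hr
    · simp
    · simp [Real.zero_rpow hr]
  · rw [Real.enorm_of_nonneg (by positivity), Real.enorm_eq_ofReal_abs,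
      ENNReal.ofReal_rpow_of_pos (abs_pos.2 ht)]

section

variable {X E : Type*} [MeasurableSpace X] {μ : Measure X} {g : X → ℝ} [NormedAddCommGroup E]
  [NormedSpace ℝ E]

theorem enorm_integral_rpow_smul_le_rieszPotential {β : ℝ} (hg : Measurable g) {f : X → E}
    (hf : AEStronglyMeasurable f μ) (x : X) :
    ‖∫ y, |g x - g y| ^ (-β) • f y ∂μ‖ₑ ≤
      rieszPotential β ((μ.withDensity fun y ↦ ‖f y‖ₑ).map g) (g x) := by
  calc ‖∫ y, |g x - g y| ^ (-β) • f y ∂μ‖ₑ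
      ≤ ∫⁻ y, ‖|g x - g y| ^ (-β) • f y‖ₑ ∂μ := enorm_integral_le_lintegral_enorm _
    _ ≤ ∫⁻ y, ‖f y‖ₑ * ‖g x - g y‖ₑ ^ (-β) ∂μ := by
      gcongr with y
      rw [enorm_smul, mul_comm]
      gcongr
      exact enorm_abs_rpow_le _ _
    _ = rieszPotential β ((μ.withDensity fun y ↦ ‖f y‖ₑ).map g) (g x) := by
      rw [rieszPotential, lintegral_map (by fun_prop) hg,
        lintegral_withDensity_eq_lintegral_mul₀ hf.enorm (by fun_prop)]
      rfl

theorem Kab_weak_type_general {c : ℝ≥0} {β p : ℝ} (hg : Measurable g)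
    (hlaw : HasPowerDistribution (μ.map g) c (β * p)) (hβ : 0 ≤ β) (hp : 1 ≤ p)
    (hβp : β * p < 1) :
    ∃ C : ℝ, 0 < C ∧ ∀ f : X → E, Integrable f μ → ∀ lam : ℝ, 0 < lam →
      μ {x | lam < ‖∫ y, |g x - g y| ^ (-β) • f y ∂μ‖} ≤
        ENNReal.ofReal ((C * (∫ y, ‖f y‖ ∂μ) / lam) ^ p) := by
  have hp_pos : 0 < p := by linarith
  obtain ⟨C, hC, hweak⟩ := hlaw.exists_rpow_mul_measure_lt_rieszPotential_le hβ hp hβp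
  obtain ⟨D, hD, hCD⟩ := exists_pos_le_ofReal_rpow hC hp_pos
  refine ⟨D, hD, fun f hf lam hlam ↦ ?_⟩
  set ν := (μ.withDensity fun y ↦ ‖f y‖ₑ).map g with hν
  have hν_univ : ν univ = ENNReal.ofReal (∫ y, ‖f y‖ ∂μ) := by
    rw [hν, map_apply hg .univ, preimage_univ, withDensity_apply _ .univ, Measure.restrict_univ,
      ofReal_integral_norm_eq_lintegral_enorm hf]
  have : IsFiniteMeasure ν := ⟨hν_univ ▸ ENNReal.ofReal_lt_top⟩
  have hsub : {x | lam < ‖∫ y, |g x - g y| ^ (-β) • f y ∂μ‖} ⊆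
      g ⁻¹' {t | ENNReal.ofReal lam < rieszPotential β ν t} := by
    intro x hx
    refine lt_of_lt_of_le ?_ (enorm_integral_rpow_smul_le_rieszPotential hg hf.1 x)
    rwa [← ofReal_norm, ENNReal.ofReal_lt_ofReal_iff_of_nonneg hlam.le]
  have hlam_ne : ENNReal.ofReal lam ^ p ≠ 0 := by simp [hlam]
  calc μ {x | lam < ‖∫ y, |g x - g y| ^ (-β) • f y ∂μ‖}
      ≤ μ.map g {t | ENNReal.ofReal lam < rieszPotential β ν t} :=
        (measure_mono hsub).trans (le_map_apply hg.aemeasurable _)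
    _ ≤ ENNReal.ofReal D ^ p * ν univ ^ p / ENNReal.ofReal lam ^ p := by
      rw [ENNReal.le_div_iff_mul_le (.inl hlam_ne) (.inl (by finiteness)), mul_comm]
      exact (hweak ν _).trans (by gcongr)
    _ = ENNReal.ofReal ((D * (∫ y, ‖f y‖ ∂μ) / lam) ^ p) := by
      rw [hν_univ, ← ENNReal.mul_rpow_of_nonneg _ _ hp_pos.le,
        ← ENNReal.div_rpow_of_nonneg _ _ hp_pos.le, ← ENNReal.ofReal_mul hD.le,
        ← ENNReal.ofReal_div_of_pos hlam,
        ENNReal.ofReal_rpow_of_nonneg (by positivity) hp_pos.le]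

end

/-- `𝒦ₐᵇ` is of weak type `(1, b/a)` when `n < a ≤ b`. -/
theorem Kab_weak_type (n : ℕ) (a b : ℝ) (ha : (n : ℝ) < a) (hab : a ≤ b) :
    ∃ C : ℝ, 0 < C ∧ ∀ f : EuclideanSpace ℝ (Fin n) → ℝ, Integrable f volume →
      ∀ lam : ℝ, 0 < lam →
        volume {x : EuclideanSpace ℝ (Fin n) | lam < |Kab n a b f x|}
          ≤ ENNReal.ofReal ((C * (∫ y, |f y|) / lam) ^ (b / a)) := by
  have ha_pos : 0 < a := (Nat.cast_nonneg n).trans_lt ha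
  have hb_pos : 0 < b := ha_pos.trans_le hab
  have hexp : (n : ℝ) / b * (b / a) = n / a := div_mul_div_cancel₀ hb_pos.ne'
  obtain ⟨c, hlaw⟩ := exists_hasPowerDistribution_map_sum_abs_rpow (Fin n) ha_pos
  rw [Fintype.card_fin, ← hexp] at hlaw
  exact Kab_weak_type_general (by fun_prop) hlaw (by positivity) ((one_le_div ha_pos).2 hab)
    (hexp ▸ (div_lt_one ha_pos).2 ha)
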